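/- Let H be a complex Hilbert space and u₁, …, u_N unitary operators on H (N ≥ 1). Set T = (2N)⁻¹·Σ_{i=1}^{N}(uᵢ + uᵢ*), a self-adjoint contraction, and let P be the orthogonal projection of H onto the closed subspace ⋂_{i=1}^{N} ker(uᵢ − 1) of common fixed vectors. Then the following are equivalent: (a) there exists κ > 0 such that κ·‖ξ − Pξ‖ ≤ max_{1 ≤ i ≤ N} ‖ξ − uᵢξ‖ for every ξ ∈ H; (b) there exists δ > 0 such that the spectrum of T contains no point of the open interval (1 − δ, 1). -/

import Mathlib

/-!
The Laplacian `Δ = ∑ᵢ (1 - uᵢ)* (1 - uᵢ)` is a positive operator with `1 - T = (2N)⁻¹ Δ`, with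
quadratic form `∑ᵢ ‖ξ - uᵢ ξ‖²`, and whose kernel consists of the common fixed vectors. So (a) says
that `Δ ≥ δ` on `(ker Δ)ᗮ` for some `δ > 0`. As the range of `Δ` is dense in `(ker Δ)ᗮ`, this bound
need only be tested on the vectors `Δ η`, where it reads `Δ³ ≥ δ Δ²`. By functional calculus the
latter means `x³ ≥ δ x²` on the spectrum of `Δ`, that is, `x = 0` or `x ≥ δ` there, which is (b).
-/

open scoped InnerProductSpace

section OrthogonalKer

variable {𝕜 E : Type*} [RCLike 𝕜] [NormedAddCommGroup E] [InnerProductSpace 𝕜 E]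
  [CompleteSpace E]

theorem eq_starProjection_of_isSelfAdjoint {P : E →L[𝕜] E} (hP : IsSelfAdjoint P)
    {K : Submodule 𝕜 E} [K.HasOrthogonalProjection] (hmem : ∀ x, P x ∈ K)
    (hfix : ∀ x ∈ K, P x = x) : P = K.starProjection := by
  ext x
  refine (K.eq_starProjection_of_mem_orthogonal (hmem x) ?_).symm
  rw [K.mem_orthogonal]
  intro y hy
  have hsymm : ⟪y, P x⟫_𝕜 = ⟪y, x⟫_𝕜 := by
    simpa [hfix y hy] using (hP.isSymmetric y x).symm
  rw [inner_sub_right, hsymm, sub_self]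

theorem forall_mem_orthogonal_ker_mul_norm_sq_le_iff_forall_apply {A : E →L[𝕜] E}
    (hA : IsSelfAdjoint A) (δ : ℝ) :
    (∀ ξ ∈ A.kerᗮ, δ * ‖ξ‖ ^ 2 ≤ A.reApplyInnerSelf ξ) ↔
      ∀ η, δ * ‖A η‖ ^ 2 ≤ A.reApplyInnerSelf (A η) := by
  have hclosure : (A.kerᗮ : Set E) = closure (Set.range A) := by
    rw [A.orthogonal_ker, ← ContinuousLinearMap.star_eq_adjoint, hA.star_eq]
    rfl
  have hclosed : IsClosed {ξ : E | δ * ‖ξ‖ ^ 2 ≤ A.reApplyInnerSelf ξ} :=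
    isClosed_le (by fun_prop) A.reApplyInnerSelf_continuous
  change (A.kerᗮ : Set E) ⊆ {ξ | δ * ‖ξ‖ ^ 2 ≤ A.reApplyInnerSelf ξ} ↔ _
  rw [hclosure, hclosed.closure_subset_iff, Set.range_subset_iff]
  rfl

theorem reApplyInnerSelf_sub_starProjection_ker {A : E →L[𝕜] E} (hA : IsSelfAdjoint A) (ξ : E) :
    A.reApplyInnerSelf (ξ - A.ker.starProjection ξ) = A.reApplyInnerSelf ξ := by
  have hker : A (A.ker.starProjection ξ) = 0 := A.ker.starProjection_apply_mem ξ
  have horth : ⟪A ξ, A.ker.starProjection ξ⟫_𝕜 = 0 := by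
    rw [← ContinuousLinearMap.coe_coe, hA.isSymmetric]
    simp [hker]
  simp [ContinuousLinearMap.reApplyInnerSelf_apply, hker, inner_sub_right, horth]

end OrthogonalKer

section SelfAdjointGap

theorem smul_sq_le_pow_three_iff_forall_mem_spectrum {R : Type*} [CStarAlgebra R] [PartialOrder R]
    [StarOrderedRing R] {a : R} (ha : IsSelfAdjoint a) (δ : ℝ) :
    δ • a ^ 2 ≤ a ^ 3 ↔ ∀ x ∈ spectrum ℝ a, x = 0 ∨ δ ≤ x := by
  have hsq : cfc (fun x : ℝ => δ • x ^ 2) a = δ • a ^ 2 := by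
    rw [cfc_smul .., cfc_pow_id ..]
  have hcube : cfc (fun x : ℝ => x ^ 3) a = a ^ 3 := cfc_pow_id ..
  rw [← hsq, ← hcube, cfc_le_iff ..]
  refine forall₂_congr fun x _ => ?_
  rcases eq_or_ne x 0 with rfl | hx
  · simp
  · rw [smul_eq_mul, pow_succ' x 2, mul_le_mul_iff_left₀ (by positivity)]
    simp [hx]

variable {H : Type*} [NormedAddCommGroup H] [InnerProductSpace ℂ H] [CompleteSpace H]
  {A : H →L[ℂ] H}

theorem smul_sq_le_pow_three_iff_forall_reApplyInnerSelf (hA : IsSelfAdjoint A) (δ : ℝ) :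
    δ • A ^ 2 ≤ A ^ 3 ↔ ∀ η, δ * ‖A η‖ ^ 2 ≤ A.reApplyInnerSelf (A η) := by
  have hself : IsSelfAdjoint (A ^ 3 - δ • A ^ 2) :=
    (hA.pow 3).sub ((IsSelfAdjoint.all δ).smul (hA.pow 2))
  rw [ContinuousLinearMap.le_def, ContinuousLinearMap.isPositive_def', and_iff_right hself]
  refine forall_congr' fun η => ?_
  have hform : (A ^ 3 - δ • A ^ 2).reApplyInnerSelf η
      = A.reApplyInnerSelf (A η) - δ * ‖A η‖ ^ 2 := by
    have hcube : ⟪(A ^ 3) η, η⟫_ℂ = ⟪A (A η), A η⟫_ℂ := hA.isSymmetric (A (A η)) η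
    have hsq : ⟪(A ^ 2) η, η⟫_ℂ = ⟪A η, A η⟫_ℂ := hA.isSymmetric (A η) η
    simp only [ContinuousLinearMap.reApplyInnerSelf_apply, sub_apply, smul_apply, inner_sub_left,
      ← Complex.coe_smul, inner_smul_left, Complex.conj_ofReal, hcube, hsq, map_sub,
      ← inner_self_eq_norm_sq (𝕜 := ℂ), RCLike.re_eq_complex_re, Complex.re_ofReal_mul]
  rw [hform, sub_nonneg]

theorem forall_mul_norm_sub_starProjection_ker_sq_le_iff_forall_mem_spectrum
    (hA : IsSelfAdjoint A) (δ : ℝ) :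
    (∀ ξ, δ * ‖ξ - A.ker.starProjection ξ‖ ^ 2 ≤ A.reApplyInnerSelf ξ) ↔
      ∀ x ∈ spectrum ℝ A, x = 0 ∨ δ ≤ x := by
  rw [← smul_sq_le_pow_three_iff_forall_mem_spectrum hA,
    smul_sq_le_pow_three_iff_forall_reApplyInnerSelf hA,
    ← forall_mem_orthogonal_ker_mul_norm_sq_le_iff_forall_apply hA]
  constructor
  · intro h ξ hξ
    simpa [A.ker.starProjection_apply_eq_zero_iff.mpr hξ] using h ξ
  · intro h ξ
    rw [← reApplyInnerSelf_sub_starProjection_ker hA]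
    exact h _ (A.ker.sub_starProjection_mem_orthogonal ξ)

end SelfAdjointGap

section Laplacian

variable {ι : Type*} [Fintype ι]

/-- The (unnormalised) Laplacian `∑ᵢ (1 - uᵢ)* (1 - uᵢ)` of a finite family of elements of a star
ring. For isometries `uᵢ` on a Hilbert space it is an affine function of their averaging operator
`(2N)⁻¹ ∑ᵢ (uᵢ + uᵢ*)`, whose eigenvalue `1` becomes the eigenvalue `0`. -/
def laplacian {R : Type*} [Ring R] [Star R] (u : ι → R) : R :=
  ∑ i, star (1 - u i) * (1 - u i)

theorem laplacian_nonneg {R : Type*} [Ring R] [PartialOrder R] [StarRing R] [StarOrderedRing R]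
    (u : ι → R) : 0 ≤ laplacian u :=
  Finset.sum_nonneg fun i _ => star_mul_self_nonneg (1 - u i)

theorem laplacian_eq_sub_sum {R : Type*} [Ring R] [StarRing R] {u : ι → R}
    (hu : ∀ i, star (u i) * u i = 1) :
    laplacian u = (2 * Fintype.card ι : R) - ∑ i, (u i + star (u i)) := by
  have hterm (i : ι) : star (1 - u i) * (1 - u i) = 2 - (u i + star (u i)) := by
    rw [star_sub, star_one, sub_mul, mul_sub, mul_sub, hu i, one_mul, one_mul, mul_one,
      ← one_add_one_eq_two]
    abel
  simp only [laplacian, hterm, Finset.sum_sub_distrib, Finset.sum_const, Finset.card_univ,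
    nsmul_eq_mul, Nat.cast_comm]

theorem inv_two_mul_card_smul_sum_eq {𝕜 R : Type*} [Field 𝕜] [CharZero 𝕜] [Ring R] [StarRing R]
    [Algebra 𝕜 R] [Nonempty ι] {u : ι → R} (hu : ∀ i, star (u i) * u i = 1) :
    (2 * Fintype.card ι : 𝕜)⁻¹ • ∑ i, (u i + star (u i))
      = 1 - (2 * Fintype.card ι : 𝕜)⁻¹ • laplacian u := by
  have hcard : (2 * Fintype.card ι : 𝕜) ≠ 0 := by simp
  have hone : (2 * Fintype.card ι : R) = (2 * Fintype.card ι : 𝕜) • (1 : R) := by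
    rw [← Algebra.algebraMap_eq_smul_one, map_mul, map_ofNat, map_natCast]
  rw [laplacian_eq_sub_sum hu, smul_sub, hone, smul_smul, inv_mul_cancel₀ hcard, one_smul,
    sub_sub_cancel]

variable {𝕜 E : Type*} [RCLike 𝕜] [NormedAddCommGroup E] [InnerProductSpace 𝕜 E]
  [CompleteSpace E]

theorem reApplyInnerSelf_laplacian (u : ι → E →L[𝕜] E) (ξ : E) :
    (laplacian u).reApplyInnerSelf ξ = ∑ i, ‖ξ - u i ξ‖ ^ 2 := by
  have hterm (i : ι) : RCLike.re ⟪(star (1 - u i) * (1 - u i)) ξ, ξ⟫_𝕜 = ‖ξ - u i ξ‖ ^ 2 :=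
    ((1 - u i).apply_norm_sq_eq_inner_adjoint_left ξ).symm
  simp only [laplacian, ContinuousLinearMap.reApplyInnerSelf_apply, sum_apply, sum_inner,
    map_sum, hterm]

theorem mem_ker_laplacian_iff {u : ι → E →L[𝕜] E} {ξ : E} :
    ξ ∈ (laplacian u).ker ↔ ∀ i, u i ξ = ξ := by
  constructor
  · intro hξ
    have hsum : ∑ i, ‖ξ - u i ξ‖ ^ 2 = 0 := by
      rw [← reApplyInnerSelf_laplacian, ContinuousLinearMap.reApplyInnerSelf_apply]
      simp [show laplacian u ξ = 0 from hξ]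
    intro i
    have hi := (Finset.sum_eq_zero_iff_of_nonneg fun i _ => by positivity).mp hsum i
      (Finset.mem_univ i)
    exact (sub_eq_zero.mp (norm_eq_zero.mp (sq_eq_zero_iff.mp hi))).symm
  · intro hξ
    simp [laplacian, hξ]

end Laplacian

section SupSum

variable {ι X : Type*} [Fintype ι]

theorem sq_iSup_le_sum_sq [Nonempty ι] (f : ι → ℝ) : (⨆ i, f i) ^ 2 ≤ ∑ i, f i ^ 2 := by
  obtain ⟨i, hi⟩ := exists_eq_ciSup_of_finite (f := f)
  rw [← hi]
  exact Finset.single_le_sum (f := fun i => f i ^ 2) (fun i _ => sq_nonneg _) (Finset.mem_univ i)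

theorem sum_sq_le_card_mul_sq_iSup {f : ι → ℝ} (hf : ∀ i, 0 ≤ f i) :
    ∑ i, f i ^ 2 ≤ Fintype.card ι * (⨆ i, f i) ^ 2 := by
  rw [← nsmul_eq_mul]
  exact Finset.sum_le_card_nsmul _ _ _ fun i _ =>
    pow_le_pow_left₀ (hf i) (le_ciSup (Set.finite_range f).bddAbove i) 2

theorem exists_mul_le_iSup_iff_exists_mul_sq_le_sum_sq [Nonempty ι] {f : X → ι → ℝ} {g : X → ℝ}
    (hf : ∀ x i, 0 ≤ f x i) (hg : ∀ x, 0 ≤ g x) :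
    (∃ κ > 0, ∀ x, κ * g x ≤ ⨆ i, f x i) ↔ ∃ c > 0, ∀ x, c * g x ^ 2 ≤ ∑ i, f x i ^ 2 := by
  constructor
  · rintro ⟨κ, hκ, h⟩
    refine ⟨κ ^ 2, by positivity, fun x => ?_⟩
    calc κ ^ 2 * g x ^ 2 = (κ * g x) ^ 2 := (mul_pow ..).symm
      _ ≤ (⨆ i, f x i) ^ 2 := pow_le_pow_left₀ (mul_nonneg hκ.le (hg x)) (h x) 2
      _ ≤ ∑ i, f x i ^ 2 := sq_iSup_le_sum_sq (f x)
  · rintro ⟨c, hc, h⟩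
    have hcard : (0 : ℝ) < Fintype.card ι := by exact_mod_cast Fintype.card_pos
    refine ⟨√(c / Fintype.card ι), by positivity, fun x => ?_⟩
    refine le_of_sq_le_sq ?_ (Real.iSup_nonneg (hf x))
    calc (√(c / Fintype.card ι) * g x) ^ 2 = c * g x ^ 2 / Fintype.card ι := by
          rw [mul_pow, Real.sq_sqrt (by positivity)]; ring
      _ ≤ (⨆ i, f x i) ^ 2 := by
          rw [div_le_iff₀' hcard]
          exact (h x).trans (sum_sq_le_card_mul_sq_iSup (hf x))

end SupSum

section SpectrumAffine

variable {𝕜 R : Type*} [Field 𝕜] [Ring R] [Algebra 𝕜 R]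

theorem one_sub_mul_mem_spectrum_one_sub_smul_iff {r : 𝕜} (hr : r ≠ 0) {a : R} {y : 𝕜} :
    1 - r * y ∈ spectrum 𝕜 (1 - r • a) ↔ y ∈ spectrum 𝕜 a := by
  have hunit : r * y ∈ spectrum 𝕜 (r • a) ↔ y ∈ spectrum 𝕜 a :=
    spectrum.smul_mem_smul_iff (r := Units.mk0 r hr)
  have hsub := spectrum.singleton_sub_eq (r • a) (1 : 𝕜)
  rw [map_one] at hsub
  rw [← hunit, ← hsub]
  simp

theorem exists_spectrum_gap_iff_one_sub_smul [LinearOrder 𝕜] [IsStrictOrderedRing 𝕜] {r : 𝕜}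
    (hr : 0 < r) {a : R} (ha : ∀ y ∈ spectrum 𝕜 a, 0 ≤ y) :
    (∃ c > 0, ∀ y ∈ spectrum 𝕜 a, y = 0 ∨ c ≤ y) ↔
      ∃ δ > 0, ∀ x, 1 - δ < x → x < 1 → x ∉ spectrum 𝕜 (1 - r • a) := by
  constructor
  · rintro ⟨c, hc, h⟩
    refine ⟨r * c, mul_pos hr hc, fun x hx hx1 hmem => ?_⟩
    obtain ⟨y, rfl⟩ : ∃ y, x = 1 - r * y := ⟨(1 - x) / r, by field_simp; ring⟩
    rcases h y ((one_sub_mul_mem_spectrum_one_sub_smul_iff hr.ne').mp hmem) with rfl | hcy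
    · simp at hx1
    · exact absurd (mul_le_mul_of_nonneg_left hcy hr.le) (by linarith)
  · rintro ⟨δ, hδ, h⟩
    refine ⟨δ / r, div_pos hδ hr, fun y hy => ?_⟩
    by_contra! hcon
    have hy0 : 0 < y := lt_of_le_of_ne (ha y hy) (Ne.symm hcon.1)
    have hyδ : r * y < δ := (lt_div_iff₀' hr).mp hcon.2
    exact h (1 - r * y) (by linarith) (by linarith [mul_pos hr hy0])
      ((one_sub_mul_mem_spectrum_one_sub_smul_iff hr.ne').mpr hy)

end SpectrumAffine

theorem spectral_gap_iff_spectrum_gap_general {H ι : Type*} [NormedAddCommGroup H]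
    [InnerProductSpace ℂ H] [CompleteSpace H] [Fintype ι] [Nonempty ι] {u : ι → H →L[ℂ] H}
    (hu : ∀ i, star (u i) * u i = 1) {T : H →L[ℂ] H}
    (hT : T = (2 * Fintype.card ι : ℂ)⁻¹ • ∑ i, (u i + star (u i))) {P : H →L[ℂ] H}
    (hPrange : ∀ ξ i, u i (P ξ) = P ξ) (hPfix : ∀ ξ, (∀ i, u i ξ = ξ) → P ξ = ξ)
    (hPsa : IsSelfAdjoint P) :
    (∃ κ > (0 : ℝ), ∀ ξ, κ * ‖ξ - P ξ‖ ≤ ⨆ i, ‖ξ - u i ξ‖) ↔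
      ∃ δ > (0 : ℝ), ∀ x : ℝ, 1 - δ < x → x < 1 → (x : ℂ) ∉ spectrum ℂ T := by
  have hP : P = (laplacian u).ker.starProjection :=
    eq_starProjection_of_isSelfAdjoint hPsa (fun ξ => mem_ker_laplacian_iff.mpr (hPrange ξ))
      fun ξ hξ => hPfix ξ (mem_ker_laplacian_iff.mp hξ)
  have hΔ : 0 ≤ laplacian u := laplacian_nonneg u
  have hTΔ : T = 1 - (2 * Fintype.card ι : ℝ)⁻¹ • laplacian u := by
    rw [hT, ← inv_two_mul_card_smul_sum_eq hu, ← Complex.coe_smul]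
    push_cast
    rfl
  calc (∃ κ > (0 : ℝ), ∀ ξ, κ * ‖ξ - P ξ‖ ≤ ⨆ i, ‖ξ - u i ξ‖)
      ↔ ∃ c > (0 : ℝ), ∀ ξ, c * ‖ξ - P ξ‖ ^ 2 ≤ ∑ i, ‖ξ - u i ξ‖ ^ 2 :=
        exists_mul_le_iSup_iff_exists_mul_sq_le_sum_sq (fun _ _ => norm_nonneg _)
          fun _ => norm_nonneg _
    _ ↔ ∃ c > (0 : ℝ), ∀ x ∈ spectrum ℝ (laplacian u), x = 0 ∨ c ≤ x := by
        simp only [hP, ← reApplyInnerSelf_laplacian,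
          forall_mul_norm_sub_starProjection_ker_sq_le_iff_forall_mem_spectrum
            (IsSelfAdjoint.of_nonneg hΔ)]
    _ ↔ ∃ δ > (0 : ℝ), ∀ x : ℝ, 1 - δ < x → x < 1 → x ∉ spectrum ℝ T := by
        rw [hTΔ]
        exact exists_spectrum_gap_iff_one_sub_smul (by positivity)
          fun _ hx => spectrum_nonneg_of_nonneg hΔ hx
    _ ↔ _ := by simp only [← Complex.coe_algebraMap, spectrum.algebraMap_mem_iff]

/-- For unitaries `u₁, …, u_N` on a complex Hilbert space `H`, with
`T = (2N)⁻¹ Σᵢ (uᵢ + uᵢ*)` and `P` the orthogonal projection onto the common fixed vectors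
`⋂ᵢ ker(uᵢ − 1)`, the spectral-gap inequality
`∃ κ > 0, κ‖ξ − Pξ‖ ≤ maxᵢ ‖ξ − uᵢξ‖` holds iff the spectrum of `T` misses an interval
`(1 − δ, 1)` for some `δ > 0`. -/
theorem spectral_gap_iff_spectrum_gap {H : Type*} [NormedAddCommGroup H]
    [InnerProductSpace ℂ H] [CompleteSpace H]
    (N : ℕ) (hN : 1 ≤ N) (u : Fin N → H →L[ℂ] H)
    (hu : ∀ i, u i ∈ unitary (H →L[ℂ] H))
    (T : H →L[ℂ] H)
    (hT : T = ((2 * N : ℂ))⁻¹ • ∑ i, (u i + star (u i)))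
    (P : H →L[ℂ] H)
    (hPrange : ∀ (ξ : H) (i : Fin N), u i (P ξ) = P ξ)
    (hPfix : ∀ ξ : H, (∀ i : Fin N, u i ξ = ξ) → P ξ = ξ)
    (hPsa : IsSelfAdjoint P) :
    (∃ κ > (0 : ℝ), ∀ ξ : H, κ * ‖ξ - P ξ‖ ≤ ⨆ i : Fin N, ‖ξ - u i ξ‖) ↔
      ∃ δ > (0 : ℝ), ∀ x : ℝ, 1 - δ < x → x < 1 → (x : ℂ) ∉ spectrum ℂ T := by
  have : Nonempty (Fin N) := ⟨⟨0, hN⟩⟩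
  exact spectral_gap_iff_spectrum_gap_general (fun i => Unitary.star_mul_self_of_mem (hu i))
    (by simpa using hT) hPrange hPfix hPsa
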